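/- For every f ∈ V(ℤ) with Δ(f) ≠ 0 one has m(f) = ∏_p m_p(f), where the product runs over all primes p, all quantities m(f) and m_p(f) are finite, and m_p(f) = 1 for all but finitely many primes p. -/

import Mathlib

noncomputable section

namespace BQPaper

/-- A binary quartic form `a x⁴ + b x³y + c x²y² + d xy³ + e y⁴` over `R`,
recorded by its coefficients. -/
structure BQ (R : Type*) where
  a : R
  b : R
  c : R
  d : R
  e : R

/-- A 2×2 matrix `!![p, q; r, s]`, recorded by its entries. -/
structure Mat2 (R : Type*) where
  p : R
  q : R
  r : R
  s : R

variable {R S : Type*} [CommRing R] [CommRing S]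

def Mat2.det (m : Mat2 R) : R := m.p * m.s - m.q * m.r

/-- Matrix product. -/
def Mat2.mul (m n : Mat2 R) : Mat2 R :=
  ⟨m.p * n.p + m.q * n.r, m.p * n.q + m.q * n.s,
   m.r * n.p + m.s * n.r, m.r * n.q + m.s * n.s⟩

/-- Scalar multiple of a matrix. -/
def Mat2.smul (z : R) (m : Mat2 R) : Mat2 R := ⟨z * m.p, z * m.q, z * m.r, z * m.s⟩

def Mat2.map (φ : R →+* S) (m : Mat2 R) : Mat2 S := ⟨φ m.p, φ m.q, φ m.r, φ m.s⟩

/-- Evaluation of a binary quartic form at `(x, y)`. -/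
def BQ.eval (f : BQ R) (x y : R) : R :=
  f.a * x ^ 4 + f.b * x ^ 3 * y + f.c * x ^ 2 * y ^ 2 + f.d * x * y ^ 3 + f.e * y ^ 4

/-- The invariant `I(f) = 12ae − 3bd + c²`. -/
def BQ.invI (f : BQ R) : R := 12 * f.a * f.e - 3 * f.b * f.d + f.c ^ 2

/-- The invariant `J(f) = 72ace + 9bcd − 27ad² − 27eb² − 2c³`. -/
def BQ.invJ (f : BQ R) : R :=
  72 * f.a * f.c * f.e + 9 * f.b * f.c * f.d - 27 * f.a * f.d ^ 2
    - 27 * f.e * f.b ^ 2 - 2 * f.c ^ 3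

/-- The discriminant of a binary quartic form; one has `Δ = (4I³ − J²)/27`. -/
def BQ.disc (f : BQ R) : R :=
  256 * f.a ^ 3 * f.e ^ 3 - 192 * f.a ^ 2 * f.b * f.d * f.e ^ 2
    - 128 * f.a ^ 2 * f.c ^ 2 * f.e ^ 2 + 144 * f.a ^ 2 * f.c * f.d ^ 2 * f.e
    - 27 * f.a ^ 2 * f.d ^ 4 + 144 * f.a * f.b ^ 2 * f.c * f.e ^ 2
    - 6 * f.a * f.b ^ 2 * f.d ^ 2 * f.e - 80 * f.a * f.b * f.c ^ 2 * f.d * f.e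
    + 18 * f.a * f.b * f.c * f.d ^ 3 + 16 * f.a * f.c ^ 4 * f.e
    - 4 * f.a * f.c ^ 3 * f.d ^ 2 - 27 * f.b ^ 4 * f.e ^ 2
    + 18 * f.b ^ 3 * f.c * f.d * f.e - 4 * f.b ^ 3 * f.d ^ 3
    - 4 * f.b ^ 2 * f.c ^ 3 * f.e + f.b ^ 2 * f.c ^ 2 * f.d ^ 2

/-- Multiplication of all coefficients of a form by a scalar. -/
def BQ.rsmul (t : R) (f : BQ R) : BQ R := ⟨t * f.a, t * f.b, t * f.c, t * f.d, t * f.e⟩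

/-- Substitution action of a 2×2 matrix on binary quartic forms:
`(m • f)(x,y) = f((x,y)·m) = f(px + ry, qx + sy)` for `m = !![p, q; r, s]`. -/
def BQ.subst (m : Mat2 R) (f : BQ R) : BQ R where
  a := f.a * m.p ^ 4 + f.b * m.p ^ 3 * m.q + f.c * m.p ^ 2 * m.q ^ 2
      + f.d * m.p * m.q ^ 3 + f.e * m.q ^ 4
  b := 4 * f.a * m.p ^ 3 * m.r + f.b * m.p ^ 3 * m.s + 3 * f.b * m.p ^ 2 * m.q * m.r
      + 2 * f.c * m.p ^ 2 * m.q * m.s + 2 * f.c * m.p * m.q ^ 2 * m.r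
      + 3 * f.d * m.p * m.q ^ 2 * m.s + f.d * m.q ^ 3 * m.r + 4 * f.e * m.q ^ 3 * m.s
  c := 6 * f.a * m.p ^ 2 * m.r ^ 2 + 3 * f.b * m.p ^ 2 * m.r * m.s
      + 3 * f.b * m.p * m.q * m.r ^ 2 + f.c * m.p ^ 2 * m.s ^ 2
      + 4 * f.c * m.p * m.q * m.r * m.s + f.c * m.q ^ 2 * m.r ^ 2
      + 3 * f.d * m.p * m.q * m.s ^ 2 + 3 * f.d * m.q ^ 2 * m.r * m.s
      + 6 * f.e * m.q ^ 2 * m.s ^ 2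
  d := 4 * f.a * m.p * m.r ^ 3 + 3 * f.b * m.p * m.r ^ 2 * m.s + f.b * m.q * m.r ^ 3
      + 2 * f.c * m.p * m.r * m.s ^ 2 + 2 * f.c * m.q * m.r ^ 2 * m.s
      + f.d * m.p * m.s ^ 3 + 3 * f.d * m.q * m.r * m.s ^ 2 + 4 * f.e * m.q * m.s ^ 3
  e := f.a * m.r ^ 4 + f.b * m.r ^ 3 * m.s + f.c * m.r ^ 2 * m.s ^ 2
      + f.d * m.r * m.s ^ 3 + f.e * m.s ^ 4

/-- The twisted action `(γ·f)(x,y) = f((x,y)·γ)/det(γ)²`, which descends to `PGL₂`.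
(`Ring.inverse` is the genuine inverse when `det` is a unit.) -/
def BQ.twist (m : Mat2 R) (f : BQ R) : BQ R :=
  BQ.rsmul (Ring.inverse m.det ^ 2) (f.subst m)

/-- Coefficientwise map of forms along a ring homomorphism. -/
def BQ.map (φ : R →+* S) (f : BQ R) : BQ S := ⟨φ f.a, φ f.b, φ f.c, φ f.d, φ f.e⟩

end BQPaper

namespace BQPaper

instance (p : Nat.Primes) : Fact (p : ℕ).Prime := ⟨p.2⟩

/-- A binary quartic form over `ℚ` is integral if it comes from a form over `ℤ`. -/
def IsIntFormQ (f : BQ ℚ) : Prop := ∃ g : BQ ℤ, g.map (Int.castRingHom ℚ) = f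

/-- A matrix over `ℚ` lies in `GL₂(ℤ)` if it is an integer matrix with unit
determinant. -/
def IsIntUnitMatQ (m : Mat2 ℚ) : Prop :=
  ∃ m' : Mat2 ℤ, IsUnit m'.det ∧ m'.map (Int.castRingHom ℚ) = m

/-- A binary quartic form over `ℚ_p` is integral if all its coefficients lie
in `ℤ_p`. -/
def IsIntFormP (p : ℕ) [Fact p.Prime] (f : BQ ℚ_[p]) : Prop :=
  ‖f.a‖ ≤ 1 ∧ ‖f.b‖ ≤ 1 ∧ ‖f.c‖ ≤ 1 ∧ ‖f.d‖ ≤ 1 ∧ ‖f.e‖ ≤ 1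

/-- A matrix over `ℚ_p` lies in `GL₂(ℤ_p)` if its entries lie in `ℤ_p` and its
determinant is a `p`-adic unit. -/
def IsIntUnitMatP (p : ℕ) [Fact p.Prime] (m : Mat2 ℚ_[p]) : Prop :=
  ‖m.p‖ ≤ 1 ∧ ‖m.q‖ ≤ 1 ∧ ‖m.r‖ ≤ 1 ∧ ‖m.s‖ ≤ 1 ∧ ‖m.det‖ = 1

/-- `PGL₂(ℚ)_f`: elements `γ` of `PGL₂(ℚ)` (presented by matrices in `GL₂(ℚ)`) with
`γ·f ∈ V(ℤ)`. -/
def GlobalSet (f : BQ ℤ) : Type _ :=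
  {m : Mat2 ℚ // IsUnit m.det ∧ IsIntFormQ ((f.map (Int.castRingHom ℚ)).twist m)}

/-- Two matrices present elements of the same left `PGL₂(ℤ)`-coset of `PGL₂(ℚ)` iff
they differ by left multiplication by `GL₂(ℤ)` and by a nonzero scalar. -/
def globalRel (f : BQ ℤ) (m₁ m₂ : GlobalSet f) : Prop :=
  ∃ (u : Mat2 ℚ) (z : ℚ), IsIntUnitMatQ u ∧ z ≠ 0 ∧
    m₂.val = Mat2.smul z (Mat2.mul u m₁.val)

/-- `m(f) = #(PGL₂(ℤ)\PGL₂(ℚ)_f)`. -/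
def mGlobal (f : BQ ℤ) : ℕ := Nat.card (Quot (globalRel f))

/-- `PGL₂(ℚ_p)_f` for an integral form `f`. -/
def LocalSet (p : ℕ) [Fact p.Prime] (f : BQ ℤ) : Type _ :=
  {m : Mat2 ℚ_[p] // IsUnit m.det ∧
    IsIntFormP p ((f.map (Int.castRingHom ℚ_[p])).twist m)}

/-- Left `PGL₂(ℤ_p)`-coset equivalence in `PGL₂(ℚ_p)`. -/
def localRel (p : ℕ) [Fact p.Prime] (f : BQ ℤ) (m₁ m₂ : LocalSet p f) : Prop :=
  ∃ (u : Mat2 ℚ_[p]) (z : ℚ_[p]), IsIntUnitMatP p u ∧ z ≠ 0 ∧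
    m₂.val = Mat2.smul z (Mat2.mul u m₁.val)

/-- `m_p(f) = #(PGL₂(ℤ_p)\PGL₂(ℚ_p)_f)`. -/
def mLocal (p : ℕ) [Fact p.Prime] (f : BQ ℤ) : ℕ := Nat.card (Quot (localRel p f))

lemma subst_mul {R : Type*} [CommRing R] (u m : Mat2 R) (f : BQ R) :
    f.subst (u.mul m) = (f.subst m).subst u := by
  simp only [BQ.subst, Mat2.mul, BQ.mk.injEq]
  refine ⟨?_, ?_, ?_, ?_, ?_⟩ <;> ring

lemma subst_smul {R : Type*} [CommRing R] (z : R) (m : Mat2 R) (f : BQ R) :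
    f.subst (m.smul z) = BQ.rsmul (z ^ 4) (f.subst m) := by
  simp only [BQ.subst, Mat2.smul, BQ.rsmul, BQ.mk.injEq]
  refine ⟨?_, ?_, ?_, ?_, ?_⟩ <;> ring

lemma subst_rsmul {R : Type*} [CommRing R] (t : R) (m : Mat2 R) (f : BQ R) :
    (BQ.rsmul t f).subst m = BQ.rsmul t (f.subst m) := by
  simp only [BQ.subst, BQ.rsmul, BQ.mk.injEq]
  refine ⟨?_, ?_, ?_, ?_, ?_⟩ <;> ring

lemma rsmul_rsmul {R : Type*} [CommRing R] (t t' : R) (f : BQ R) :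
    BQ.rsmul t (BQ.rsmul t' f) = BQ.rsmul (t * t') f := by
  simp only [BQ.rsmul, BQ.mk.injEq]
  refine ⟨?_, ?_, ?_, ?_, ?_⟩ <;> ring

lemma det_mul' {R : Type*} [CommRing R] (u m : Mat2 R) :
    (u.mul m).det = u.det * m.det := by
  simp only [Mat2.det, Mat2.mul]; ring

lemma det_smul' {R : Type*} [CommRing R] (z : R) (m : Mat2 R) :
    (m.smul z).det = z ^ 2 * m.det := by
  simp only [Mat2.det, Mat2.smul]; ring

lemma det_map' {R S : Type*} [CommRing R] [CommRing S] (φ : R →+* S) (m : Mat2 R) :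
    (m.map φ).det = φ m.det := by
  simp only [Mat2.det, Mat2.map, map_sub, map_mul]

lemma mul_map' {R S : Type*} [CommRing R] [CommRing S] (φ : R →+* S) (u m : Mat2 R) :
    (u.mul m).map φ = (u.map φ).mul (m.map φ) := by
  simp only [Mat2.mul, Mat2.map, map_add, map_mul]

lemma smul_map' {R S : Type*} [CommRing R] [CommRing S] (φ : R →+* S) (z : R) (m : Mat2 R) :
    (m.smul z).map φ = (m.map φ).smul (φ z) := by
  simp only [Mat2.smul, Mat2.map, map_mul]

lemma subst_map' {R S : Type*} [CommRing R] [CommRing S] (φ : R →+* S) (m : Mat2 R) (f : BQ R) :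
    (f.subst m).map φ = (f.map φ).subst (m.map φ) := by
  simp only [BQ.subst, BQ.map, Mat2.map, map_add, map_mul, map_pow, map_ofNat]

lemma rsmul_map' {R S : Type*} [CommRing R] [CommRing S] (φ : R →+* S) (t : R) (f : BQ R) :
    (BQ.rsmul t f).map φ = BQ.rsmul (φ t) (f.map φ) := by
  simp only [BQ.rsmul, BQ.map, map_mul]

lemma twist_map' {K L : Type*} [Field K] [Field L] (φ : K →+* L) (m : Mat2 K) (f : BQ K) :
    (f.twist m).map φ = (f.map φ).twist (m.map φ) := by
  simp only [BQ.twist, rsmul_map', subst_map', det_map', Ring.inverse_eq_inv', map_pow, map_inv₀]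

lemma twist_mul' {K : Type*} [Field K] (u m : Mat2 K) (f : BQ K) :
    f.twist (u.mul m) = (f.twist m).twist u := by
  simp only [BQ.twist, subst_mul, det_mul', Ring.inverse_eq_inv', subst_rsmul, rsmul_rsmul]
  congr 1
  rw [mul_inv, mul_pow]

lemma twist_smul' {K : Type*} [Field K] (z : K) (hz : z ≠ 0) (m : Mat2 K) (f : BQ K) :
    f.twist (m.smul z) = f.twist m := by
  simp only [BQ.twist, subst_smul, det_smul', Ring.inverse_eq_inv', rsmul_rsmul]
  congr 1
  rw [mul_inv, mul_pow]
  field_simp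

/-- adjugate inverse -/
def minv {K : Type*} [Field K] (m : Mat2 K) : Mat2 K :=
  ⟨m.det⁻¹ * m.s, - (m.det⁻¹ * m.q), - (m.det⁻¹ * m.r), m.det⁻¹ * m.p⟩

def mone (R : Type*) [CommRing R] : Mat2 R := ⟨1, 0, 0, 1⟩

lemma mul_assoc' {R : Type*} [CommRing R] (u v w : Mat2 R) :
    (u.mul v).mul w = u.mul (v.mul w) := by
  simp only [Mat2.mul, Mat2.mk.injEq]
  refine ⟨?_, ?_, ?_, ?_⟩ <;> ring

lemma smul_mul' {R : Type*} [CommRing R] (z : R) (v w : Mat2 R) :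
    (v.smul z).mul w = (v.mul w).smul z := by
  simp only [Mat2.mul, Mat2.smul, Mat2.mk.injEq]
  refine ⟨?_, ?_, ?_, ?_⟩ <;> ring

lemma mul_smul' {R : Type*} [CommRing R] (z : R) (v w : Mat2 R) :
    v.mul (w.smul z) = (v.mul w).smul z := by
  simp only [Mat2.mul, Mat2.smul, Mat2.mk.injEq]
  refine ⟨?_, ?_, ?_, ?_⟩ <;> ring

lemma smul_smul' {R : Type*} [CommRing R] (z z' : R) (v : Mat2 R) :
    (v.smul z).smul z' = v.smul (z' * z) := by
  simp only [Mat2.smul, Mat2.mk.injEq]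
  refine ⟨?_, ?_, ?_, ?_⟩ <;> ring

lemma one_smul' {R : Type*} [CommRing R] (v : Mat2 R) : v.smul 1 = v := by
  simp [Mat2.smul]

lemma one_mul' {R : Type*} [CommRing R] (v : Mat2 R) : (mone R).mul v = v := by
  simp [Mat2.mul, mone]

lemma mul_one' {R : Type*} [CommRing R] (v : Mat2 R) : v.mul (mone R) = v := by
  simp [Mat2.mul, mone]

lemma minv_mul {K : Type*} [Field K] (m : Mat2 K) (h : m.det ≠ 0) : (minv m).mul m = mone K := by
  have := inv_mul_cancel₀ h
  simp only [Mat2.det] at this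
  simp only [minv, Mat2.mul, mone, Mat2.det, Mat2.mk.injEq]
  refine ⟨?_, ?_, ?_, ?_⟩
  · linear_combination this
  · ring
  · ring
  · linear_combination this

lemma mul_minv {K : Type*} [Field K] (m : Mat2 K) (h : m.det ≠ 0) : m.mul (minv m) = mone K := by
  have := inv_mul_cancel₀ h
  simp only [Mat2.det] at this
  simp only [minv, Mat2.mul, mone, Mat2.det, Mat2.mk.injEq]
  refine ⟨?_, ?_, ?_, ?_⟩
  · linear_combination this
  · ring
  · ring
  · linear_combination this

section loc
variable (p : ℕ) [Fact p.Prime]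

def EqvP (m₁ m₂ : Mat2 ℚ_[p]) : Prop :=
  ∃ (u : Mat2 ℚ_[p]) (z : ℚ_[p]), IsIntUnitMatP p u ∧ z ≠ 0 ∧ m₂ = Mat2.smul z (Mat2.mul u m₁)

lemma nadd {x y : ℚ_[p]} (hx : ‖x‖ ≤ 1) (hy : ‖y‖ ≤ 1) : ‖x + y‖ ≤ 1 :=
  (PadicInt.subring p).add_mem hx hy
lemma nmul {x y : ℚ_[p]} (hx : ‖x‖ ≤ 1) (hy : ‖y‖ ≤ 1) : ‖x * y‖ ≤ 1 :=
  (PadicInt.subring p).mul_mem hx hy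
lemma nneg {x : ℚ_[p]} (hx : ‖x‖ ≤ 1) : ‖-x‖ ≤ 1 :=
  (PadicInt.subring p).neg_mem hx

lemma unit_one : IsIntUnitMatP p (mone _) := by
  simp [IsIntUnitMatP, mone, Mat2.det]

lemma unit_mul {u v : Mat2 ℚ_[p]} (hu : IsIntUnitMatP p u) (hv : IsIntUnitMatP p v) :
    IsIntUnitMatP p (u.mul v) := by
  obtain ⟨a, b, c, d, e⟩ := hu
  obtain ⟨a', b', c', d', e'⟩ := hv
  refine ⟨?_, ?_, ?_, ?_, ?_⟩
  rotate_right
  · rw [det_mul', norm_mul, e, e', one_mul]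
  all_goals simp only [Mat2.mul]; apply nadd <;> apply nmul <;> assumption

lemma unit_inv {u : Mat2 ℚ_[p]} (hu : IsIntUnitMatP p u) : IsIntUnitMatP p (minv u) := by
  obtain ⟨a, b, c, d, e⟩ := hu
  have h0 : u.det ≠ 0 := by intro h; simp [h] at e
  have h1 : ‖u.det⁻¹‖ = 1 := by simp [e]
  refine ⟨?_, ?_, ?_, ?_, ?_⟩
  rotate_right
  · have := congrArg Mat2.det (minv_mul u h0)
    rw [det_mul'] at this
    have := congrArg norm this
    rw [norm_mul, e] at this
    simpa [mone, Mat2.det] using this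
  all_goals simp only [minv, norm_neg, norm_mul, h1, one_mul]; assumption

lemma eqv_refl (m : Mat2 ℚ_[p]) : EqvP p m m :=
  ⟨mone _, 1, unit_one p, one_ne_zero, by rw [one_mul', one_smul']⟩

variable {p}

lemma unit_det_ne {u : Mat2 ℚ_[p]} (hu : IsIntUnitMatP p u) : u.det ≠ 0 := by
  intro h
  have := hu.2.2.2.2
  simp [h] at this

lemma eqv_symm {m n : Mat2 ℚ_[p]} (h : EqvP p m n) : EqvP p n m := by
  obtain ⟨u, z, hu, hz, rfl⟩ := h
  refine ⟨minv u, z⁻¹, unit_inv p hu, inv_ne_zero hz, ?_⟩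
  rw [mul_smul', smul_smul', ← mul_assoc', minv_mul u (unit_det_ne hu), one_mul',
    inv_mul_cancel₀ hz, one_smul']

lemma eqv_trans {m n k : Mat2 ℚ_[p]} (h : EqvP p m n) (h' : EqvP p n k) : EqvP p m k := by
  obtain ⟨u, z, hu, hz, rfl⟩ := h
  obtain ⟨u', z', hu', hz', rfl⟩ := h'
  refine ⟨u'.mul u, z' * z, unit_mul p hu' hu, mul_ne_zero hz' hz, ?_⟩
  rw [mul_smul', smul_smul', mul_assoc']

lemma eqv_det {m n : Mat2 ℚ_[p]} (h : EqvP p m n) (hm : m.det ≠ 0) : n.det ≠ 0 := by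
  obtain ⟨u, z, hu, hz, rfl⟩ := h
  rw [det_smul', det_mul']
  exact mul_ne_zero (pow_ne_zero _ hz) (mul_ne_zero (unit_det_ne hu) hm)

lemma liftForm {g : BQ ℚ_[p]} (h : IsIntFormP p g) :
    ∃ g' : BQ ℤ_[p], g'.map PadicInt.Coe.ringHom = g :=
  ⟨⟨⟨g.a, h.1⟩, ⟨g.b, h.2.1⟩, ⟨g.c, h.2.2.1⟩, ⟨g.d, h.2.2.2.1⟩, ⟨g.e, h.2.2.2.2⟩⟩, rfl⟩

lemma intForm_map (g : BQ ℤ_[p]) : IsIntFormP p (g.map PadicInt.Coe.ringHom) :=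
  ⟨g.a.2, g.b.2, g.c.2, g.d.2, g.e.2⟩

lemma intForm_int (g : BQ ℤ) : IsIntFormP p (g.map (Int.castRingHom _)) := by
  refine ⟨?_, ?_, ?_, ?_, ?_⟩ <;> exact Padic.norm_int_le_one _

lemma intForm_subst {g : BQ ℚ_[p]} (h : IsIntFormP p g) {m : Mat2 ℚ_[p]}
    (h1 : ‖m.p‖ ≤ 1) (h2 : ‖m.q‖ ≤ 1) (h3 : ‖m.r‖ ≤ 1) (h4 : ‖m.s‖ ≤ 1) :
    IsIntFormP p (g.subst m) := by
  obtain ⟨g', rfl⟩ := liftForm h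
  let m' : Mat2 ℤ_[p] := ⟨⟨m.p, h1⟩, ⟨m.q, h2⟩, ⟨m.r, h3⟩, ⟨m.s, h4⟩⟩
  have : m = m'.map PadicInt.Coe.ringHom := rfl
  rw [this, ← subst_map']
  exact intForm_map _

lemma intForm_twist {g : BQ ℚ_[p]} (h : IsIntFormP p g) {m : Mat2 ℚ_[p]}
    (hm : IsIntUnitMatP p m) : IsIntFormP p (g.twist m) := by
  obtain ⟨a, b, c, d, e⟩ := intForm_subst h hm.1 hm.2.1 hm.2.2.1 hm.2.2.2.1
  have h1 : ‖Ring.inverse m.det ^ 2‖ = 1 := by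
    rw [Ring.inverse_eq_inv', norm_pow, norm_inv, hm.2.2.2.2]; simp
  refine ⟨?_, ?_, ?_, ?_, ?_⟩ <;>
  · simp only [BQ.twist, BQ.rsmul, norm_mul, h1, one_mul]; assumption

lemma intForm_eqv {g : BQ ℚ_[p]} {m n : Mat2 ℚ_[p]} (h : IsIntFormP p (g.twist m))
    (hmn : EqvP p m n) : IsIntFormP p (g.twist n) := by
  obtain ⟨u, z, hu, hz, rfl⟩ := hmn
  rw [twist_smul' z hz, twist_mul']
  exact intForm_twist h hu

lemma localRel_iff (f : BQ ℤ) (m n : LocalSet p f) : localRel p f m n ↔ EqvP p m.val n.val :=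
  Iff.rfl

lemma mk_eq_iff (f : BQ ℤ) (m n : LocalSet p f) :
    Quot.mk (localRel p f) m = Quot.mk (localRel p f) n ↔ EqvP p m.val n.val := by
  have : Equivalence (localRel p f) :=
    ⟨fun m => eqv_refl p m.val, fun h => eqv_symm h, fun h h' => eqv_trans h h'⟩
  rw [this.quot_mk_eq_iff]
  rfl

end loc

section loc2
variable {p : ℕ} [Fact p.Prime]

lemma coe_rh (x : ℤ_[p]) : PadicInt.Coe.ringHom x = (x : ℚ_[p]) := rfl

lemma of_dvd_aux {x y q : ℤ_[p]} (h : (x : ℚ_[p]) = q * y) : x = q * y := by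
  apply Subtype.ext
  rw [h]; rfl

/-- column swap -/
def cswap {R : Type*} (m : Mat2 R) : Mat2 R := ⟨m.q, m.p, m.s, m.r⟩

lemma eqv_cswap {m n : Mat2 ℚ_[p]} (h : EqvP p m n) : EqvP p (cswap m) (cswap n) := by
  obtain ⟨u, z, hu, hz, rfl⟩ := h
  exact ⟨u, z, hu, hz, rfl⟩

lemma eqv_rswap (m : Mat2 ℚ_[p]) : EqvP p m ⟨m.r, m.s, m.p, m.q⟩ := by
  refine ⟨⟨0, 1, 1, 0⟩, 1, ?_, one_ne_zero, ?_⟩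
  · simp [IsIntUnitMatP, Mat2.det]
  · simp [Mat2.mul, Mat2.smul]

def T1 (p : ℕ) [Fact p.Prime] (n : ℕ) (x : ℤ_[p]) : Mat2 ℚ_[p] := ⟨(p : ℚ_[p]) ^ n, 0, x, 1⟩

lemma normal_aux (m : Mat2 ℚ_[p]) (hm : m.det ≠ 0) (h1 : ‖m.p‖ ≤ ‖m.s‖) (h2 : ‖m.q‖ ≤ ‖m.s‖)
    (h3 : ‖m.r‖ ≤ ‖m.s‖) : ∃ n x, EqvP p m (T1 p n x) := by
  have hs : m.s ≠ 0 := by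
    intro h
    rw [h, norm_zero, norm_le_zero_iff] at h1 h2
    exact hm (by simp [Mat2.det, h1, h2])
  have hs' : 0 < ‖m.s‖ := norm_pos_iff.2 hs
  have k1 : ‖m.p / m.s‖ ≤ 1 := by rw [norm_div]; exact div_le_one_of_le₀ h1 hs'.le
  have k2 : ‖m.q / m.s‖ ≤ 1 := by rw [norm_div]; exact div_le_one_of_le₀ h2 hs'.le
  have k3 : ‖m.r / m.s‖ ≤ 1 := by rw [norm_div]; exact div_le_one_of_le₀ h3 hs'.le
  have kD : ‖m.p / m.s + -(m.q / m.s * (m.r / m.s))‖ ≤ 1 :=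
    nadd p k1 (nneg p (nmul p k2 k3))
  let D : ℤ_[p] := ⟨_, kD⟩
  have hDe : (D : ℚ_[p]) = m.det / m.s ^ 2 := by
    show m.p / m.s + -(m.q / m.s * (m.r / m.s)) = _
    rw [Mat2.det]; field_simp; ring
  have hD0 : D ≠ 0 := by
    intro h
    have : (D : ℚ_[p]) = 0 := by rw [h]; rfl
    rw [hDe] at this
    exact div_ne_zero hm (pow_ne_zero _ hs) this
  have hspec := PadicInt.unitCoeff_spec hD0
  set w := PadicInt.unitCoeff hD0
  have hw : ‖((w : ℤ_[p]) : ℚ_[p])‖ = 1 := PadicInt.norm_units w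
  have hw0 : ((w : ℤ_[p]) : ℚ_[p]) ≠ 0 := by intro h; simp [h] at hw
  have hspec' : m.det / m.s ^ 2 = ((w : ℤ_[p]) : ℚ_[p]) * (p : ℚ_[p]) ^ D.valuation := by
    rw [← hDe]; conv_lhs => rw [hspec]
    push_cast; rfl
  refine ⟨D.valuation, ⟨_, k3⟩, ⟨⟨((w : ℤ_[p]) : ℚ_[p])⁻¹, -(((w : ℤ_[p]) : ℚ_[p])⁻¹ * (m.q / m.s)), 0, 1⟩,
    m.s⁻¹, ⟨?_, ?_, ?_, ?_, ?_⟩, inv_ne_zero hs, ?_⟩⟩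
  · simp [hw]
  · rw [norm_neg, norm_mul, norm_inv, hw]; simpa using k2
  · simp
  · simp
  · simp [Mat2.det, hw]
  · have e1 : (p : ℚ_[p]) ^ D.valuation = ((w : ℤ_[p]) : ℚ_[p])⁻¹ * (m.det / m.s ^ 2) := by
      rw [hspec', inv_mul_cancel_left₀ hw0]
    simp only [T1, Mat2.smul, Mat2.mul, Mat2.mk.injEq, e1, Mat2.det]
    generalize ((w : ℤ_[p]) : ℚ_[p])⁻¹ = W
    refine ⟨?_, ?_, ?_, ?_⟩
    · field_simp; ring
    · field_simp; ring
    · simp; field_simp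
    · simp [hs]

lemma cswap_det {m : Mat2 ℚ_[p]} : (cswap m).det = -m.det := by
  simp only [cswap, Mat2.det]; ring

lemma normal_bot (m : Mat2 ℚ_[p]) (hm : m.det ≠ 0) (h1 : max ‖m.p‖ ‖m.q‖ ≤ max ‖m.r‖ ‖m.s‖) :
    ∃ n x, EqvP p m (T1 p n x) ∨ EqvP p m (cswap (T1 p n x)) := by
  rcases le_total ‖m.r‖ ‖m.s‖ with h | h
  · rw [max_eq_right h, max_le_iff] at h1
    obtain ⟨n, x, hx⟩ := normal_aux m hm h1.1 h1.2 h
    exact ⟨n, x, Or.inl hx⟩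
  · rw [max_eq_left h, max_le_iff] at h1
    obtain ⟨n, x, hx⟩ := normal_aux (cswap m) (by rw [cswap_det]; exact neg_ne_zero.2 hm)
      h1.2 h1.1 h
    exact ⟨n, x, Or.inr (eqv_cswap hx)⟩

lemma normal (m : Mat2 ℚ_[p]) (hm : m.det ≠ 0) :
    ∃ n x, EqvP p m (T1 p n x) ∨ EqvP p m (cswap (T1 p n x)) := by
  rcases le_total (max ‖m.p‖ ‖m.q‖) (max ‖m.r‖ ‖m.s‖) with h | h
  · exact normal_bot m hm h
  · obtain ⟨n, x, hx⟩ := normal_bot (p := p) ⟨m.r, m.s, m.p, m.q⟩ (eqv_det (eqv_rswap m) hm) h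
    exact ⟨n, x, hx.imp (eqv_trans (eqv_rswap m)) (eqv_trans (eqv_rswap m))⟩

lemma disc_dvd {R : Type*} [CommRing R] (a b c d e q : R) :
    q ^ 2 ∣ (BQ.mk a b c (q * d) (q ^ 2 * e)).disc := by
  refine ⟨256 * a ^ 3 * e ^ 3 * q ^ 4 - 192 * a ^ 2 * b * d * e ^ 2 * q ^ 3
    - 128 * a ^ 2 * c ^ 2 * e ^ 2 * q ^ 2 + 144 * a ^ 2 * c * d ^ 2 * e * q ^ 2
    - 27 * a ^ 2 * d ^ 4 * q ^ 2 + 144 * a * b ^ 2 * c * e ^ 2 * q ^ 2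
    - 6 * a * b ^ 2 * d ^ 2 * e * q ^ 2 - 80 * a * b * c ^ 2 * d * e * q
    + 18 * a * b * c * d ^ 3 * q + 16 * a * c ^ 4 * e
    - 4 * a * c ^ 3 * d ^ 2 - 27 * b ^ 4 * e ^ 2 * q ^ 2
    + 18 * b ^ 3 * c * d * e * q - 4 * b ^ 3 * d ^ 3 * q
    - 4 * b ^ 2 * c ^ 3 * e + b ^ 2 * c ^ 2 * d ^ 2, ?_⟩
  simp only [BQ.disc]
  ring

lemma disc_diag (g : BQ ℤ_[p]) (n : ℕ)
    (h : IsIntFormP p ((g.map PadicInt.Coe.ringHom).twist ⟨(p : ℚ_[p]) ^ n, 0, 0, 1⟩)) :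
    ((p : ℤ_[p]) ^ n) ^ 2 ∣ g.disc := by
  have hp : (p : ℚ_[p]) ≠ 0 := by exact_mod_cast (Fact.out : p.Prime).ne_zero
  have hq : (p : ℚ_[p]) ^ n ≠ 0 := pow_ne_zero _ hp
  obtain ⟨-, -, -, h4, h5⟩ := h
  simp only [BQ.twist, BQ.rsmul, BQ.subst, BQ.map, Mat2.det, Ring.inverse_eq_inv'] at h4 h5
  have hd : g.d = (p : ℤ_[p]) ^ n * ⟨_, h4⟩ := by
    apply of_dvd_aux
    push_cast
    simp only [coe_rh]
    field_simp
    ring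
  have he : g.e = ((p : ℤ_[p]) ^ n) ^ 2 * ⟨_, h5⟩ := by
    apply of_dvd_aux
    push_cast
    simp only [coe_rh]
    field_simp
    ring
  have : g = ⟨g.a, g.b, g.c, (p : ℤ_[p]) ^ n * ⟨_, h4⟩, ((p : ℤ_[p]) ^ n) ^ 2 * ⟨_, h5⟩⟩ := by
    rw [← hd, ← he]
  rw [this]
  exact disc_dvd _ _ _ _ _ _

lemma disc_subst1 {R : Type*} [CommRing R] (f : BQ R) (x : R) :
    (f.subst ⟨1, 0, x, 1⟩).disc = f.disc := by
  simp only [BQ.subst, BQ.disc]; ring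

lemma disc_subst2 {R : Type*} [CommRing R] (f : BQ R) (x : R) :
    (f.subst ⟨0, 1, 1, x⟩).disc = f.disc := by
  simp only [BQ.subst, BQ.disc]; ring

lemma disc_int_dvd (f : BQ ℤ) (n : ℕ)
    (h : ((p : ℤ_[p]) ^ n) ^ 2 ∣ (f.map (Int.castRingHom ℤ_[p])).disc) :
    (p : ℤ) ^ (2 * n) ∣ f.disc := by
  have h1 : (f.map (Int.castRingHom ℤ_[p])).disc = ((f.disc : ℤ) : ℤ_[p]) := by
    simp [BQ.map, BQ.disc]
  rw [h1, ← pow_mul, mul_comm, ← Ideal.mem_span_singleton,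
    ← PadicInt.norm_le_pow_iff_mem_span_pow, PadicInt.norm_int_le_pow_iff_dvd] at h
  exact_mod_cast h

lemma twist_unimod (g : BQ ℤ_[p]) (V : Mat2 ℤ_[p]) (hV : V.det ^ 2 = 1) :
    (g.map PadicInt.Coe.ringHom).twist (V.map PadicInt.Coe.ringHom)
      = (g.subst V).map PadicInt.Coe.ringHom := by
  rw [subst_map', BQ.twist, det_map', Ring.inverse_eq_inv', inv_pow, ← map_pow, hV]
  simp [BQ.rsmul]

lemma map_map_int (f : BQ ℤ) :
    f.map (Int.castRingHom ℚ_[p]) = (f.map (Int.castRingHom ℤ_[p])).map PadicInt.Coe.ringHom := by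
  simp [BQ.map]

lemma T1_dvd (f : BQ ℤ) (n : ℕ) (x : ℤ_[p])
    (h : IsIntFormP p ((f.map (Int.castRingHom ℚ_[p])).twist (T1 p n x))) :
    (p : ℤ) ^ (2 * n) ∣ f.disc := by
  apply disc_int_dvd (p := p)
  rw [← disc_subst1 _ x]
  apply disc_diag
  rw [← twist_unimod _ _ (by simp [Mat2.det]), ← twist_mul', ← map_map_int]
  have e : Mat2.mul ⟨(p : ℚ_[p]) ^ n, 0, 0, 1⟩ (Mat2.map PadicInt.Coe.ringHom ⟨1, 0, x, 1⟩) = T1 p n x := by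
    simp [Mat2.mul, Mat2.map, T1, coe_rh]
  rwa [e]

lemma T2_dvd (f : BQ ℤ) (n : ℕ) (x : ℤ_[p])
    (h : IsIntFormP p ((f.map (Int.castRingHom ℚ_[p])).twist (cswap (T1 p n x)))) :
    (p : ℤ) ^ (2 * n) ∣ f.disc := by
  apply disc_int_dvd (p := p)
  rw [← disc_subst2 _ x]
  apply disc_diag
  rw [← twist_unimod _ _ (by simp [Mat2.det]), ← twist_mul', ← map_map_int]
  have e : Mat2.mul ⟨(p : ℚ_[p]) ^ n, 0, 0, 1⟩ (Mat2.map PadicInt.Coe.ringHom ⟨0, 1, 1, x⟩) = cswap (T1 p n x) := by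
    simp [Mat2.mul, Mat2.map, T1, cswap, coe_rh]
  rwa [e]

lemma normal' (f : BQ ℤ) (m : LocalSet p f) :
    ∃ n x, (p : ℤ) ^ (2 * n) ∣ f.disc ∧
      (EqvP p m.val (T1 p n x) ∨ EqvP p m.val (cswap (T1 p n x))) := by
  obtain ⟨n, x, h⟩ := normal m.val m.2.1.ne_zero
  refine ⟨n, x, ?_, h⟩
  rcases h with h | h
  · exact T1_dvd f n x (intForm_eqv m.2.2 h)
  · exact T2_dvd f n x (intForm_eqv m.2.2 h)

lemma T1_eqv (n : ℕ) (x y : ℤ_[p]) (h : (p : ℤ_[p]) ^ n ∣ y - x) :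
    EqvP p (T1 p n x) (T1 p n y) := by
  obtain ⟨t, ht⟩ := h
  refine ⟨⟨1, 0, t, 1⟩, 1, ?_, one_ne_zero, ?_⟩
  · simp [IsIntUnitMatP, Mat2.det, PadicInt.norm_le_one t]
  · have : (y : ℚ_[p]) = t * (p : ℚ_[p]) ^ n + x := by
      have := congrArg (PadicInt.Coe.ringHom) ht
      simp [coe_rh] at this
      linear_combination this
    simp [Mat2.mul, Mat2.smul, T1, this]

instance (f : BQ ℤ) : Nonempty (LocalSet p f) :=
  ⟨⟨mone _, by simp [mone, Mat2.det], intForm_twist (intForm_int f) (unit_one p)⟩⟩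

lemma local_unique (f : BQ ℤ) (hp : ¬ (p : ℤ) ∣ f.disc) (m n : LocalSet p f) :
    EqvP p m.val n.val := by
  suffices h : ∀ m : LocalSet p f, EqvP p (mone _) m.val from eqv_trans (eqv_symm (h m)) (h n)
  intro m
  obtain ⟨n, x, hd, h⟩ := normal' f m
  have hn : n = 0 := by
    by_contra hn
    exact hp ((dvd_pow_self _ (by omega)).trans hd)
  subst hn
  have hx := PadicInt.norm_le_one x
  rcases h with h | h
  · refine eqv_trans ⟨T1 p 0 x, 1, ?_, one_ne_zero, ?_⟩ (eqv_symm h)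
    · simp [IsIntUnitMatP, Mat2.det, T1, hx]
    · rw [mul_one', one_smul']
  · refine eqv_trans ⟨cswap (T1 p 0 x), 1, ?_, one_ne_zero, ?_⟩ (eqv_symm h)
    · simp [IsIntUnitMatP, Mat2.det, T1, hx, cswap]
    · rw [mul_one', one_smul']

lemma local_finite (f : BQ ℤ) (hΔ : f.disc ≠ 0) : Finite (Quot (localRel p f)) := by
  classical
  choose n x hd he using normal' (p := p) f
  set N := f.disc.natAbs
  have hn : ∀ m, n m < N + 1 := by
    intro m
    have h1 := Int.natAbs_dvd_natAbs.2 (hd m)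
    rw [Int.natAbs_pow, Int.natAbs_natCast] at h1
    have h2 := Nat.le_of_dvd (Int.natAbs_pos.2 hΔ) h1
    have h3 := Nat.lt_pow_self (n := 2 * n m) (Fact.out : p.Prime).one_lt
    omega
  have : NeZero (p ^ N) := ⟨pow_ne_zero _ (Fact.out : p.Prime).ne_zero⟩
  let F : LocalSet p f → Fin (N + 1) × ZMod (p ^ N) × Prop := fun m =>
    (⟨n m, hn m⟩, PadicInt.toZModPow N (x m), EqvP p m.val (T1 p (n m) (x m)))
  have hF : ∀ m m', F m = F m' → Quot.mk (localRel p f) m = Quot.mk (localRel p f) m' := by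
    intro m m' h
    simp only [F, Prod.mk.injEq, Fin.mk.injEq] at h
    obtain ⟨h1, h2, h3⟩ := h
    rw [mk_eq_iff]
    have hdv : (p : ℤ_[p]) ^ n m ∣ x m' - x m := by
      have : x m' - x m ∈ RingHom.ker (PadicInt.toZModPow (p := p) N) := by
        rw [RingHom.mem_ker, map_sub, h2, sub_self]
      rw [PadicInt.ker_toZModPow, Ideal.mem_span_singleton] at this
      exact (pow_dvd_pow _ (Nat.lt_succ_iff.1 (hn m))).trans this
    have hT := T1_eqv _ _ _ hdv
    by_cases hc : EqvP p m.val (T1 p (n m) (x m))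
    · have hc' : EqvP p m'.val (T1 p (n m') (x m')) := h3 ▸ hc
      rw [← h1] at hc'
      exact eqv_trans (eqv_trans hc hT) (eqv_symm hc')
    · have hc' : ¬ EqvP p m'.val (T1 p (n m') (x m')) := h3 ▸ hc
      have k := (he m).resolve_left hc
      have k' := (he m').resolve_left hc'
      rw [← h1] at k'
      exact eqv_trans (eqv_trans k (eqv_cswap hT)) (eqv_symm k')
  refine Finite.of_injective (fun q : Quot (localRel p f) => F q.out) ?_
  intro q q' h
  have := hF _ _ h
  rwa [Quot.out_eq, Quot.out_eq] at this

lemma hermite (m : Mat2 ℚ_[p]) (hm : m.det ≠ 0) :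
    ∃ α y, α ≠ 0 ∧ EqvP p m ⟨α, y, 0, 1⟩ := by
  have key : ∀ m : Mat2 ℚ_[p], m.det ≠ 0 → ‖m.r‖ ≤ ‖m.p‖ →
      ∃ α y, α ≠ 0 ∧ EqvP p m ⟨α, y, 0, 1⟩ := by
    intro m hm h
    have hp : m.p ≠ 0 := by
      intro h0
      rw [h0, norm_zero, norm_le_zero_iff] at h
      exact hm (by simp [Mat2.det, h, h0])
    have hz : m.det / m.p ≠ 0 := div_ne_zero hm hp
    refine ⟨(m.det / m.p)⁻¹ * m.p, (m.det / m.p)⁻¹ * m.q, mul_ne_zero (inv_ne_zero hz) hp,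
      ⟨1, 0, -(m.r / m.p), 1⟩, (m.det / m.p)⁻¹, ?_, inv_ne_zero hz, ?_⟩
    · simp [IsIntUnitMatP, Mat2.det]
      exact div_le_one_of_le₀ h (norm_nonneg _)
    · have e : -(m.r / m.p) * m.q + m.s = m.det / m.p := by
        rw [Mat2.det]; field_simp; ring
      simp only [Mat2.smul, Mat2.mul, Mat2.mk.injEq, one_mul, zero_mul, add_zero, e,
        inv_mul_cancel₀ hz, and_true, true_and]
      field_simp
      simp
  rcases le_total ‖m.r‖ ‖m.p‖ with h | h
  · exact key m hm h
  · obtain ⟨α, y, h1, h2⟩ := key ⟨m.r, m.s, m.p, m.q⟩ (eqv_det (eqv_rswap m) hm) h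
    exact ⟨α, y, h1, eqv_trans (eqv_rswap m) h2⟩

end loc2

lemma rat_int (q : ℚ) (h : ∀ p : Nat.Primes, ‖(q : ℚ_[(p : ℕ)])‖ ≤ 1) : ∃ z : ℤ, (z : ℚ) = q := by
  by_cases hd : q.den = 1
  · exact ⟨q.num, (Rat.den_eq_one_iff q).1 hd⟩
  exfalso
  obtain ⟨p, hp, hpd⟩ := Nat.exists_prime_and_dvd hd
  have : Fact p.Prime := ⟨hp⟩
  have h1 : ‖(q : ℚ_[p])‖ ≤ 1 := h ⟨p, hp⟩
  have h2 : ‖((q.den : ℕ) : ℚ_[p])‖ < 1 := Padic.norm_natCast_lt_one_iff.2 hpd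
  have h3 : (q : ℚ_[p]) * ((q.den : ℕ) : ℚ_[p]) = ((q.num : ℤ) : ℚ_[p]) := by
    have := Rat.mul_den_eq_num q
    exact_mod_cast congrArg (fun t : ℚ => (t : ℚ_[p])) this
  have h4 : ‖((q.num : ℤ) : ℚ_[p])‖ < 1 := by
    rw [← h3, norm_mul]
    exact lt_of_le_of_lt (mul_le_of_le_one_left (norm_nonneg _) h1) h2
  have h5 := Padic.norm_intCast_lt_one_iff.1 h4
  have h6 := Int.natCast_dvd.1 h5
  exact hp.one_lt.ne' (Nat.dvd_one.1 (q.reduced ▸ Nat.dvd_gcd h6 hpd))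

lemma norm_other {p q : Nat.Primes} (h : p ≠ q) : ‖((p : ℕ) : ℚ_[(q : ℕ)])‖ = 1 := by
  rw [Padic.norm_natCast_eq_one_iff, Nat.coprime_primes q.2 p.2]
  exact fun e => h (Subtype.ext e.symm)

lemma exists_scale (S : Finset Nat.Primes) (α : ∀ p : Nat.Primes, ℚ_[(p : ℕ)])
    (hα : ∀ p, α p ≠ 0) : ∃ A : ℚ, A ≠ 0 ∧
      (∀ p ∈ S, ‖(A : ℚ_[(p : ℕ)])‖ = ‖α p‖) ∧ ∀ p ∉ S, ‖(A : ℚ_[(p : ℕ)])‖ = 1 := by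
  classical
  induction S using Finset.induction_on with
  | empty => exact ⟨1, one_ne_zero, by simp, by simp⟩
  | insert q S hq ih =>
    obtain ⟨A, h0, h1, h2⟩ := ih
    have hq0 : ((q : ℕ) : ℚ) ≠ 0 := by exact_mod_cast q.2.ne_zero
    refine ⟨A * ((q : ℕ) : ℚ) ^ (α q).valuation, mul_ne_zero h0 (zpow_ne_zero _ hq0), ?_, ?_⟩
    · intro p hp
      push_cast
      rw [norm_mul]
      rcases Finset.mem_insert.1 hp with rfl | hp
      · rw [h2 _ hq, one_mul, Padic.norm_p_zpow, Padic.norm_eq_zpow_neg_valuation (hα p)]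
      · rw [norm_zpow, norm_other (by rintro rfl; exact hq hp), one_zpow, mul_one, h1 _ hp]
    · intro p hp
      rw [Finset.mem_insert, not_or] at hp
      push_cast
      rw [norm_mul, norm_zpow, norm_other (Ne.symm hp.1), one_zpow, mul_one, h2 _ hp.2]

lemma exists_principal (p : Nat.Primes) (y : ℚ_[(p : ℕ)]) : ∃ r : ℚ,
    ‖(r : ℚ_[(p : ℕ)]) - y‖ ≤ 1 ∧ ∀ q : Nat.Primes, q ≠ p → ‖(r : ℚ_[(q : ℕ)])‖ ≤ 1 := by
  have hp0 : ((p : ℕ) : ℚ_[(p : ℕ)]) ≠ 0 := by exact_mod_cast p.2.ne_zero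
  obtain ⟨k, hk⟩ : ∃ k : ℕ, ‖((p : ℕ) : ℚ_[(p : ℕ)]) ^ k * y‖ ≤ 1 := by
    obtain ⟨k, hk⟩ := pow_unbounded_of_one_lt ‖y‖
      (show (1 : ℝ) < ((p : ℕ) : ℝ) by exact_mod_cast p.2.one_lt)
    refine ⟨k, ?_⟩
    rw [norm_mul, Padic.norm_p_pow, zpow_neg, zpow_natCast]
    have : (0 : ℝ) < ((p : ℕ) : ℝ) ^ k := pow_pos (by exact_mod_cast p.2.pos) _
    rw [inv_mul_le_iff₀ this, mul_one]
    exact hk.le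
  let Y : ℤ_[(p : ℕ)] := ⟨_, hk⟩
  have hs := PadicInt.appr_spec k Y
  rw [Ideal.mem_span_singleton] at hs
  obtain ⟨c, hc⟩ := hs
  refine ⟨(Y.appr k : ℚ) / ((p : ℕ) : ℚ) ^ k, ?_, ?_⟩
  · have hc' := congrArg (PadicInt.Coe.ringHom) hc
    simp [coe_rh] at hc'
    have e : (Y : ℚ_[(p : ℕ)]) = ((p : ℕ) : ℚ_[(p : ℕ)]) ^ k * y := rfl
    rw [e] at hc'
    have : (((Y.appr k : ℚ) / ((p : ℕ) : ℚ) ^ k : ℚ) : ℚ_[(p : ℕ)]) - y = -(c : ℚ_[(p : ℕ)]) := by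
      push_cast
      field_simp
      linear_combination -hc'
    rw [this, norm_neg]
    exact c.2
  · intro q hq
    push_cast
    rw [norm_div, norm_pow, norm_other hq.symm, one_pow, div_one]
    exact_mod_cast Padic.norm_int_le_one (p := (q : ℕ)) (Y.appr k : ℤ)

lemma exists_shift (S : Finset Nat.Primes) (y : ∀ p : Nat.Primes, ℚ_[(p : ℕ)]) : ∃ x : ℚ,
      (∀ p ∈ S, ‖(x : ℚ_[(p : ℕ)]) - y p‖ ≤ 1) ∧ ∀ p ∉ S, ‖(x : ℚ_[(p : ℕ)])‖ ≤ 1 := by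
  classical
  induction S using Finset.induction_on with
  | empty => exact ⟨0, by simp, by simp⟩
  | insert q S hq ih =>
    obtain ⟨A, h1, h2⟩ := ih
    obtain ⟨r, k1, k2⟩ := exists_principal q (y q)
    refine ⟨A + r, ?_, ?_⟩
    · intro p hp
      push_cast
      rcases Finset.mem_insert.1 hp with rfl | hp'
      · rw [add_sub_assoc]
        exact nadd _ (h2 _ hq) k1
      · rw [add_sub_right_comm]
        exact nadd _ (h1 _ hp') (k2 _ (fun e => hq (e ▸ hp')))
    · intro p hp
      rw [Finset.mem_insert, not_or] at hp
      push_cast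
      exact nadd _ (h2 _ hp.2) (k2 _ hp.1)

section glob

lemma map_map_rat (p : ℕ) [Fact p.Prime] (f : BQ ℤ) :
    (f.map (Int.castRingHom ℚ)).map (Rat.castHom ℚ_[p]) = f.map (Int.castRingHom ℚ_[p]) := by
  simp [BQ.map]

lemma intForm_of_local (g : BQ ℚ)
    (h : ∀ p : Nat.Primes, IsIntFormP (p : ℕ) (g.map (Rat.castHom _))) : IsIntFormQ g := by
  obtain ⟨a, ha⟩ := rat_int g.a fun p => (h p).1
  obtain ⟨b, hb⟩ := rat_int g.b fun p => (h p).2.1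
  obtain ⟨c, hc⟩ := rat_int g.c fun p => (h p).2.2.1
  obtain ⟨d, hd⟩ := rat_int g.d fun p => (h p).2.2.2.1
  obtain ⟨e, he⟩ := rat_int g.e fun p => (h p).2.2.2.2
  refine ⟨⟨a, b, c, d, e⟩, ?_⟩
  simp [BQ.map, ha, hb, hc, hd, he]

/-- localization -/
def toLocal (f : BQ ℤ) (p : Nat.Primes) (m : GlobalSet f) : LocalSet (p : ℕ) f :=
  ⟨m.val.map (Rat.castHom _), by
    rw [det_map']
    exact m.2.1.map _, by
    rw [← map_map_rat, ← twist_map']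
    obtain ⟨g, hg⟩ := m.2.2
    rw [← hg, map_map_rat]
    exact intForm_int g⟩

lemma toLocal_rel (f : BQ ℤ) (p : Nat.Primes) (m n : GlobalSet f) (h : globalRel f m n) :
    localRel (p : ℕ) f (toLocal f p m) (toLocal f p n) := by
  obtain ⟨u, z, ⟨u', hu, rfl⟩, hz, he⟩ := h
  refine ⟨(u'.map (Int.castRingHom ℚ)).map (Rat.castHom _), (z : ℚ_[(p : ℕ)]), ?_, ?_, ?_⟩
  · refine ⟨?_, ?_, ?_, ?_, ?_⟩
    · simpa [Mat2.map] using Padic.norm_int_le_one (p := (p : ℕ)) u'.p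
    · simpa [Mat2.map] using Padic.norm_int_le_one (p := (p : ℕ)) u'.q
    · simpa [Mat2.map] using Padic.norm_int_le_one (p := (p : ℕ)) u'.r
    · simpa [Mat2.map] using Padic.norm_int_le_one (p := (p : ℕ)) u'.s
    · rw [det_map', det_map']
      rcases Int.isUnit_iff.1 hu with h | h <;> simp [h]
  · exact_mod_cast hz
  · show n.val.map _ = Mat2.smul _ (Mat2.mul _ (m.val.map _))
    rw [he, smul_map', mul_map']
    rfl

lemma exists_common (δ : Mat2 ℚ) : ∃ (t : ℚ) (D : Mat2 ℤ), t ≠ 0 ∧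
    δ = (D.map (Int.castRingHom ℚ)).smul t := by
  refine ⟨((δ.p.den * δ.q.den * δ.r.den * δ.s.den : ℕ) : ℚ)⁻¹,
    ⟨δ.p.num * δ.q.den * δ.r.den * δ.s.den, δ.p.den * δ.q.num * δ.r.den * δ.s.den,
      δ.p.den * δ.q.den * δ.r.num * δ.s.den, δ.p.den * δ.q.den * δ.r.den * δ.s.num⟩, ?_, ?_⟩
  · have h1 := δ.p.den_nz
    have h2 := δ.q.den_nz
    have h3 := δ.r.den_nz
    have h4 := δ.s.den_nz
    positivity
  · have h1 : (δ.p.den : ℚ) ≠ 0 := by exact_mod_cast δ.p.den_nz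
    have h2 : (δ.q.den : ℚ) ≠ 0 := by exact_mod_cast δ.q.den_nz
    have h3 : (δ.r.den : ℚ) ≠ 0 := by exact_mod_cast δ.r.den_nz
    have h4 : (δ.s.den : ℚ) ≠ 0 := by exact_mod_cast δ.s.den_nz
    have e1 := Rat.mul_den_eq_num δ.p
    have e2 := Rat.mul_den_eq_num δ.q
    have e3 := Rat.mul_den_eq_num δ.r
    have e4 := Rat.mul_den_eq_num δ.s
    obtain ⟨a, b, c, d⟩ := δ
    simp only [Mat2.smul, Mat2.map, Mat2.mk.injEq] at *
    simp only [eq_intCast, Int.cast_mul, Nat.cast_mul, Int.cast_natCast, ← e1, ← e2, ← e3, ← e4]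
    refine ⟨?_, ?_, ?_, ?_⟩ <;> field_simp

lemma exists_prim (δ : Mat2 ℚ) (h : δ.det ≠ 0) : ∃ (t : ℚ) (D : Mat2 ℤ), t ≠ 0 ∧
    δ = (D.map (Int.castRingHom ℚ)).smul t ∧
    ∀ p : ℕ, p.Prime → ¬ ((p : ℤ) ∣ D.p ∧ (p : ℤ) ∣ D.q ∧ (p : ℤ) ∣ D.r ∧ (p : ℤ) ∣ D.s) := by
  obtain ⟨t, D, ht, rfl⟩ := exists_common δ
  set g : ℤ := gcd (gcd D.p D.q) (gcd D.r D.s) with hg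
  obtain ⟨a, ha⟩ : g ∣ D.p := (gcd_dvd_left _ _).trans (gcd_dvd_left _ _)
  obtain ⟨b, hb⟩ : g ∣ D.q := (gcd_dvd_left _ _).trans (gcd_dvd_right _ _)
  obtain ⟨c, hc⟩ : g ∣ D.r := (gcd_dvd_right _ _).trans (gcd_dvd_left _ _)
  obtain ⟨d, hd⟩ : g ∣ D.s := (gcd_dvd_right _ _).trans (gcd_dvd_right _ _)
  have hg0 : g ≠ 0 := by
    intro h0
    apply h
    rw [h0, zero_mul] at ha hb hc hd
    simp [Mat2.det, Mat2.smul, Mat2.map, ha, hb, hc, hd]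
  refine ⟨t * g, ⟨a, b, c, d⟩, mul_ne_zero ht (by exact_mod_cast hg0), ?_, ?_⟩
  · simp only [Mat2.smul, Mat2.map, ha, hb, hc, hd, Mat2.mk.injEq, eq_intCast]
    push_cast
    refine ⟨?_, ?_, ?_, ?_⟩ <;> ring
  · rintro p hp ⟨h1, h2, h3, h4⟩
    have : g * p ∣ g := by
      conv_rhs => rw [hg]
      refine dvd_gcd (dvd_gcd ?_ ?_) (dvd_gcd ?_ ?_)
      · rw [ha]; exact mul_dvd_mul_left _ h1
      · rw [hb]; exact mul_dvd_mul_left _ h2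
      · rw [hc]; exact mul_dvd_mul_left _ h3
      · rw [hd]; exact mul_dvd_mul_left _ h4
    have h5 : (p : ℤ) ∣ 1 := by
      rw [← mul_dvd_mul_iff_left hg0, mul_one]; exact this
    have := Int.natCast_dvd_natCast.1 (by exact_mod_cast h5 : ((p : ℕ) : ℤ) ∣ ((1 : ℕ) : ℤ))
    exact hp.one_lt.ne' (Nat.dvd_one.1 this)

lemma prim_det {p : ℕ} [Fact p.Prime] (D : Mat2 ℤ)
    (h : ¬ ((p : ℤ) ∣ D.p ∧ (p : ℤ) ∣ D.q ∧ (p : ℤ) ∣ D.r ∧ (p : ℤ) ∣ D.s))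
    (u : Mat2 ℚ_[p]) (z : ℚ_[p]) (hu : IsIntUnitMatP p u)
    (he : D.map (Int.castRingHom ℚ_[p]) = u.smul z) : ¬ (p : ℤ) ∣ D.det := by
  obtain ⟨u1, u2, u3, u4, u5⟩ := hu
  simp only [← Padic.norm_intCast_lt_one_iff (p := p)] at h ⊢
  have hdet : ((D.det : ℤ) : ℚ_[p]) = z ^ 2 * u.det := by
    rw [← det_smul', ← he, det_map']; rfl
  rw [hdet, norm_mul, u5, mul_one, norm_pow, not_lt]
  have hz : 1 ≤ ‖z‖ := by
    by_contra hz
    push Not at hz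
    apply h
    have key : ∀ x : ℚ_[p], ‖x‖ ≤ 1 → ‖z * x‖ < 1 := fun x hx => by
      rw [norm_mul]; exact lt_of_le_of_lt (mul_le_of_le_one_right (norm_nonneg _) hx) hz
    simp only [Mat2.map, Mat2.smul, Mat2.mk.injEq, eq_intCast] at he
    obtain ⟨e1, e2, e3, e4⟩ := he
    rw [e1, e2, e3, e4]
    exact ⟨key _ u1, key _ u2, key _ u3, key _ u4⟩
  exact one_le_pow₀ hz

lemma globalRel_of_local (f : BQ ℤ) (m n : GlobalSet f)
    (h : ∀ p : Nat.Primes, EqvP (p : ℕ) (toLocal f p m).val (toLocal f p n).val) :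
    globalRel f m n := by
  have hm : m.val.det ≠ 0 := m.2.1.ne_zero
  have hn : n.val.det ≠ 0 := n.2.1.ne_zero
  set δ := n.val.mul (minv m.val) with hδ
  have hδm : δ.mul m.val = n.val := by
    rw [hδ, mul_assoc', minv_mul _ hm, mul_one']
  have hδd : δ.det ≠ 0 := by
    intro h0
    apply hn
    rw [← hδm, det_mul', h0, zero_mul]
  obtain ⟨t, D, ht, hD, hprim⟩ := exists_prim δ hδd
  refine ⟨D.map (Int.castRingHom ℚ), t, ⟨D, ?_, rfl⟩, ht, ?_⟩
  · rw [Int.isUnit_iff_natAbs_eq]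
    by_contra hne
    obtain ⟨p, hp, hpd⟩ := Nat.exists_prime_and_dvd hne
    have : Fact p.Prime := ⟨hp⟩
    obtain ⟨u, z, hu, hz, he⟩ := h ⟨p, hp⟩
    change n.val.map (Rat.castHom ℚ_[p]) = Mat2.smul z (Mat2.mul u (m.val.map (Rat.castHom ℚ_[p]))) at he
    have ht' : (t : ℚ_[p]) ≠ 0 := by exact_mod_cast ht
    refine prim_det D (hprim p hp) u ((t : ℚ_[p])⁻¹ * z) hu ?_ (Int.natCast_dvd.2 hpd)
    have hm' : (m.val.map (Rat.castHom ℚ_[p])).det ≠ 0 := by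
      rw [det_map']; exact (map_ne_zero _).2 hm
    rw [← hδm, mul_map', ← smul_mul'] at he
    have he2 := congrArg (fun w => Mat2.mul w (minv (m.val.map (Rat.castHom ℚ_[p])))) he
    simp only [mul_assoc', mul_minv _ hm', mul_one'] at he2
    rw [hD, smul_map'] at he2
    have he3 := congrArg (Mat2.smul (t : ℚ_[p])⁻¹) he2
    rw [smul_smul', smul_smul'] at he3
    rw [← he3]
    simp [Mat2.map, Mat2.smul, ht']
  · rw [← smul_mul', ← hD, hδm]

end glob

lemma primes_dvd_finite {d : ℤ} (hd : d ≠ 0) :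
    {p : Nat.Primes | ((p : ℕ) : ℤ) ∣ d}.Finite := by
  have h : Set.Finite {n : ℕ | n ≤ d.natAbs} := Set.finite_le_nat _
  refine (h.preimage (f := fun p : Nat.Primes => (p : ℕ))
    (Subtype.val_injective.injOn)).subset fun p hp => ?_
  exact Nat.le_of_dvd (Int.natAbs_pos.2 hd) (Int.natCast_dvd.1 hp)

/-- The local-global map. -/
def Phi (f : BQ ℤ) (S : Finset Nat.Primes) :
    Quot (globalRel f) → ∀ p : S, Quot (localRel ((p : Nat.Primes) : ℕ) f) :=
  Quot.lift (fun m p => Quot.mk _ (toLocal f p m)) fun m n h => by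
    funext p
    exact Quot.sound (toLocal_rel f p m n h)

lemma eqv_upper {p : ℕ} [Fact p.Prime] (A α x y : ℚ_[p]) (hα : α ≠ 0) (hA : ‖A‖ = ‖α‖)
    (h : ‖x - A / α * y‖ ≤ 1) : EqvP p ⟨α, y, 0, 1⟩ ⟨A, x, 0, 1⟩ := by
  have hn : ‖A / α‖ = 1 := by rw [norm_div, hA, div_self (norm_ne_zero_iff.2 hα)]
  refine ⟨⟨A / α, x - A / α * y, 0, 1⟩, 1, ⟨hn.le, h, by simp, by simp, ?_⟩, one_ne_zero, ?_⟩
  · simp only [Mat2.det, mul_one, mul_zero, sub_zero, hn]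
  · simp only [Mat2.smul, Mat2.mul, Mat2.mk.injEq]
    refine ⟨?_, ?_, ?_, ?_⟩
    · field_simp; ring
    · ring
    · ring
    · ring

lemma Phi_bij (f : BQ ℤ) (S : Finset Nat.Primes)
    (hS : ∀ p : Nat.Primes, p ∉ S → ¬ ((p : ℕ) : ℤ) ∣ f.disc) : Function.Bijective (Phi f S) := by
  classical
  constructor
  · intro a b hab
    induction a using Quot.ind with | mk a =>
    induction b using Quot.ind with | mk b =>
    apply Quot.sound
    apply globalRel_of_local
    intro p
    by_cases hp : p ∈ S
    · exact (mk_eq_iff f _ _).1 (congrFun hab ⟨p, hp⟩)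
    · exact local_unique f (hS p hp) _ _
  · intro c
    have hex : ∀ p : Nat.Primes, ∃ α y : ℚ_[(p : ℕ)], α ≠ 0 ∧ ∀ hp : p ∈ S,
        ∃ m : LocalSet (p : ℕ) f, Quot.mk _ m = c ⟨p, hp⟩ ∧
          EqvP (p : ℕ) m.val ⟨α, y, 0, 1⟩ := by
      intro p
      by_cases hp : p ∈ S
      · obtain ⟨m, hm⟩ := Quot.exists_rep (c ⟨p, hp⟩)
        obtain ⟨α, y, h1, h2⟩ := hermite m.val m.2.1.ne_zero
        exact ⟨α, y, h1, fun _ => ⟨m, hm, h2⟩⟩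
      · exact ⟨1, 0, one_ne_zero, fun h => absurd h hp⟩
    choose α y hα hm using hex
    obtain ⟨A, hA0, hA1, hA2⟩ := exists_scale S α hα
    obtain ⟨x, hx1, hx2⟩ := exists_shift S (fun p => (A : ℚ_[(p : ℕ)]) / α p * y p)
    let γ : Mat2 ℚ := ⟨A, x, 0, 1⟩
    have hmap : ∀ p : Nat.Primes, γ.map (Rat.castHom ℚ_[(p : ℕ)]) = ⟨A, x, 0, 1⟩ := by
      intro p; simp [γ, Mat2.map]
    have hγS : ∀ (p : Nat.Primes) (_ : p ∈ S),
        EqvP (p : ℕ) ⟨α p, y p, 0, 1⟩ (γ.map (Rat.castHom ℚ_[(p : ℕ)])) := by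
      intro p hp
      rw [hmap]
      exact eqv_upper _ _ _ _ (hα p) (hA1 p hp) (hx1 p hp)
    have hγ : IsIntFormQ ((f.map (Int.castRingHom ℚ)).twist γ) := by
      apply intForm_of_local
      intro p
      rw [twist_map', map_map_rat]
      by_cases hp : p ∈ S
      · obtain ⟨m, -, he⟩ := hm p hp
        exact intForm_eqv m.2.2 (eqv_trans he (hγS p hp))
      · apply intForm_twist (intForm_int f)
        rw [hmap]
        refine ⟨(hA2 p hp).le, hx2 p hp, by simp, by simp, ?_⟩
        simp only [Mat2.det, mul_one, mul_zero, sub_zero, hA2 p hp]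
    have hdet : IsUnit γ.det := by
      simp [γ, Mat2.det, hA0]
    refine ⟨Quot.mk _ ⟨γ, hdet, hγ⟩, ?_⟩
    funext ⟨p, hp⟩
    obtain ⟨m, hmc, he⟩ := hm p hp
    rw [← hmc]
    exact (mk_eq_iff f _ _).2 (eqv_symm (eqv_trans he (hγS p hp)))

/-- For every integral binary quartic form `f` with `Δ(f) ≠ 0`, all
the quantities `m(f)` and `m_p(f)` are finite, `m_p(f) = 1` for all but finitely many
primes `p`, and `m(f) = ∏_p m_p(f)`. -/
theorem m_euler_product (f : BQ ℤ) (hΔ : f.disc ≠ 0) :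
    Finite (Quot (globalRel f)) ∧
    (∀ p : Nat.Primes, Finite (Quot (localRel (p : ℕ) f))) ∧
    {p : Nat.Primes | mLocal (p : ℕ) f ≠ 1}.Finite ∧
    mGlobal f = ∏ᶠ p : Nat.Primes, mLocal (p : ℕ) f := by
  classical
  have hfin : ∀ p : Nat.Primes, Finite (Quot (localRel (p : ℕ) f)) := fun p => local_finite f hΔ
  have hSf : {p : Nat.Primes | ((p : ℕ) : ℤ) ∣ f.disc}.Finite := primes_dvd_finite hΔ
  set S := hSf.toFinset with hS
  have hmem : ∀ p : Nat.Primes, p ∈ S ↔ ((p : ℕ) : ℤ) ∣ f.disc := by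
    intro p; simp [hS]
  have h1 : ∀ p : Nat.Primes, p ∉ S → mLocal (p : ℕ) f = 1 := by
    intro p hp
    rw [hmem] at hp
    rw [mLocal, Nat.card_eq_one_iff_unique]
    refine ⟨⟨fun a b => ?_⟩, (inferInstance : Nonempty (LocalSet (p : ℕ) f)).map (Quot.mk _)⟩
    induction a using Quot.ind with | mk a =>
    induction b using Quot.ind with | mk b =>
    rw [mk_eq_iff]
    exact local_unique f hp a b
  let e := Equiv.ofBijective _ (Phi_bij f S fun p hp => (hmem p).not.1 hp)
  refine ⟨Finite.of_equiv _ e.symm, hfin, ?_, ?_⟩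
  · refine S.finite_toSet.subset fun p hp => ?_
    by_contra h
    exact hp (h1 p h)
  · rw [finprod_eq_prod_of_mulSupport_subset (s := S), mGlobal, Nat.card_congr e, Nat.card_pi,
      ← Finset.prod_coe_sort S]
    · rfl
    · intro p hp
      by_contra h
      exact hp (h1 p h)

end BQPaper
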